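/- Suppose 0 ≤ α and both α⁴ − 4(1−√2)α³ − 12(3−√2)α² − 12(6−√2)α − 48 < 0 and 6α⁵ + (23+3√2)α⁴ + (13+19√2)α³ − (77−38√2)α² − (157−24√2)α − 96 < 0 (these inequalities hold exactly for 0 ≤ α < α₊, where α₊ ≈ 1.524 is the largest real root of the quintic). Then the 3D Lamé system is positive definite with weight Φ: for every u ∈ C_0^∞(ℝ³∖{0};ℝ³), ∫_{ℝ³}(Lu)·(Φu) dx ≥ 0. -/

import Mathlib

/-!
Why the theorem holds. Write `r = |x|`, `ω = x / r`, `κ = α / (α + 2)`, `Φ = c_α W` with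
`W = r⁻¹ (I + κ ω⊗ω)`, and `M_ij = ∂ᵢ uⱼ`, `T = tr M = div u`. Away from the origin,

  `(Lu)·(Wu) = div V + r⁻¹ (|M|² + κ |Mω|² + α T² + α κ T (ω·Mω) - κ (T² - tr M²))`

for an explicit flux `V` (`flux`, `divergence_identity`). The flux collects the usual integrations
by parts together with the null Lagrangian `div (r⁻¹ (u div u - (u·∇) u))`, taken with the factor
`κ` for which every term containing an undifferentiated `u` cancels; the cancellation uses
`α (κ - 1) = -2 κ`, and it reflects the fact that constant fields are annihilated by `L`.

The residual form in `M` is nonnegative at every point (`form_nonneg`): splitting off the trace parts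
`m = ω·Mω` and `p = T - m` leaves the binary form
`((α + 1)² (p² + 2 m²) + (3 α² + 2 α) p m) / (α + 2)`, which is nonnegative for `0 ≤ α ≤ 2`.
The quintic inequality forces `α ≤ 2`. Since `u` vanishes near the origin and has compact support,
`V` is `C¹` with compact support, so `∫ div V = 0` and the integral is nonnegative.
-/


open MeasureTheory Metric Real Filter

noncomputable section

/-- `ℝ³` as Euclidean space. -/
abbrev E3 : Type := EuclideanSpace ℝ (Fin 3)

/-- Partial derivative `∂ᵢ f` on `ℝ³`. -/
def pd (i : Fin 3) (f : E3 → ℝ) (x : E3) : ℝ :=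
  fderiv ℝ f x (EuclideanSpace.single i 1)

/-- Laplacian on `ℝ³`. -/
def lap (f : E3 → ℝ) (x : E3) : ℝ := ∑ i, pd i (pd i f) x

/-- Divergence of a vector field on `ℝ³`. -/
def divg (u : E3 → Fin 3 → ℝ) (x : E3) : ℝ := ∑ k, pd k (fun y => u y k) x

/-- The 3D Lamé operator `(Lu)ᵢ = -Δuᵢ - α ∂ᵢ (div u)`. -/
def lame (α : ℝ) (u : E3 → Fin 3 → ℝ) (x : E3) (i : Fin 3) : ℝ :=
  - lap (fun y => u y i) x - α * pd i (divg u) x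

/-- The constant `c_α = (α+2)/(8π(α+1))`. -/
def cA (α : ℝ) : ℝ := (α + 2) / (8 * Real.pi * (α + 1))

/-- The fundamental matrix `Φ` of the 3D Lamé system:
`Φ_ij(x) = c_α |x|⁻¹ (δ_ij + (α/(α+2)) xᵢxⱼ/|x|²)`. -/
def Phi (α : ℝ) (x : E3) (i j : Fin 3) : ℝ :=
  cA α * ‖x‖⁻¹ * ((if i = j then (1 : ℝ) else 0) + (α / (α + 2)) * (x i * x j) / ‖x‖ ^ 2)

/-- `u ∈ C₀^∞(U; ℝ³)`: smooth, compactly supported, with support inside `U`. -/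
def IsTestOn (U : Set E3) (u : E3 → Fin 3 → ℝ) : Prop :=
  ContDiff ℝ (⊤ : ℕ∞) u ∧ HasCompactSupport u ∧ tsupport u ⊆ U

/-- `∫_{ℝ³} (Lu)·(Φ(·-y) u) dx`. -/
def lameEnergy (α : ℝ) (u : E3 → Fin 3 → ℝ) (y : E3) : ℝ :=
  ∫ x : E3, ∑ i, ∑ j, lame α u x i * Phi α (x - y) i j * u x j

/-! ### Partial derivatives -/

/-- `f` is differentiable at `x` with `k`-th partial derivative `d`. -/
def HasPd (k : Fin 3) (f : E3 → ℝ) (d : ℝ) (x : E3) : Prop :=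
  DifferentiableAt ℝ f x ∧ pd k f x = d

lemma HasPd.of_diff {k : Fin 3} {f : E3 → ℝ} {x : E3} (h : DifferentiableAt ℝ f x) :
    HasPd k f (pd k f x) x := ⟨h, rfl⟩

lemma HasPd.add {k : Fin 3} {f g : E3 → ℝ} {a b : ℝ} {x : E3}
    (hf : HasPd k f a x) (hg : HasPd k g b x) : HasPd k (fun y => f y + g y) (a + b) x := by
  refine ⟨hf.1.add hg.1, ?_⟩
  rw [← hf.2, ← hg.2]
  simp only [pd]
  rw [fderiv_fun_add hf.1 hg.1]
  simp

lemma HasPd.mul {k : Fin 3} {f g : E3 → ℝ} {a b : ℝ} {x : E3}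
    (hf : HasPd k f a x) (hg : HasPd k g b x) :
    HasPd k (fun y => f y * g y) (a * g x + f x * b) x := by
  refine ⟨hf.1.mul hg.1, ?_⟩
  rw [← hf.2, ← hg.2]
  simp only [pd]
  rw [fderiv_fun_mul hf.1 hg.1]
  simp
  ring

lemma HasPd.const_mul {k : Fin 3} {f : E3 → ℝ} {a : ℝ} {x : E3} (c : ℝ)
    (hf : HasPd k f a x) : HasPd k (fun y => c * f y) (c * a) x := by
  refine ⟨hf.1.const_mul c, ?_⟩
  rw [← hf.2]
  simp only [pd]
  rw [fderiv_const_mul hf.1]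
  simp

lemma HasPd.sum {k : Fin 3} {f : Fin 3 → E3 → ℝ} {a : Fin 3 → ℝ} {x : E3}
    (hf : ∀ i, HasPd k (f i) (a i) x) : HasPd k (fun y => ∑ i, f i y) (∑ i, a i) x := by
  simp only [Fin.sum_univ_three]
  exact ((hf 0).add (hf 1)).add (hf 2)

lemma hasPd_coord (k j : Fin 3) (x : E3) :
    HasPd k (fun y : E3 => y j) (if j = k then 1 else 0) x := by
  have h : HasFDerivAt (fun y : E3 => y j) (EuclideanSpace.proj j : E3 →L[ℝ] ℝ) x :=
    (EuclideanSpace.proj j : E3 →L[ℝ] ℝ).hasFDerivAt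
  refine ⟨h.differentiableAt, ?_⟩
  simp [pd, h.fderiv]

lemma hasPd_inv_norm (k : Fin 3) {x : E3} (hx : x ≠ 0) :
    HasPd k (fun y : E3 => ‖y‖⁻¹) (-(x k * ‖x‖⁻¹ ^ 3)) x := by
  have hn : ‖x‖ ≠ 0 := norm_ne_zero_iff.mpr hx
  have hd : DifferentiableAt ℝ (fun y : E3 => ‖y‖) x :=
    (contDiffAt_norm ℝ hx (n := 1)).differentiableAt (by norm_num)
  -- differentiate `‖y‖² = ⟪y, y⟫`
  have h2 : HasFDerivAt (fun y : E3 => ‖y‖ ^ 2) (2 • (innerSL ℝ x)) x :=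
    (hasStrictFDerivAt_norm_sq x).hasFDerivAt
  have h3 := (hd.hasFDerivAt.pow 2).unique h2
  have h4 := congrArg (fun L : E3 →L[ℝ] ℝ => L (EuclideanSpace.single k 1)) h3
  simp [EuclideanSpace.inner_single_right] at h4
  refine ⟨hd.inv hn, ?_⟩
  simp only [pd]
  have h5 := ((hasDerivAt_inv hn).comp_hasFDerivAt x hd.hasFDerivAt).fderiv
  simp only [Function.comp_def] at h5
  rw [h5]
  simp
  field_simp
  linarith

lemma contDiff_pd {n : ℕ} (k : Fin 3) {f : E3 → ℝ} (hf : ContDiff ℝ (n + 1 : ℕ) f) :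
    ContDiff ℝ n (pd k f) := by
  unfold pd
  exact (hf.fderiv_right (m := n) (by norm_cast)).clm_apply contDiff_const

lemma pd_comm (j k : Fin 3) {f : E3 → ℝ} (hf : ContDiff ℝ 2 f) (x : E3) :
    pd j (pd k f) x = pd k (pd j f) x := by
  have hd : DifferentiableAt ℝ (fderiv ℝ f) x :=
    ((hf.fderiv_right (m := 1) (by norm_num)).differentiable (by norm_num)) x
  have key : ∀ a b : Fin 3, pd a (pd b f) x =
      fderiv ℝ (fderiv ℝ f) x (EuclideanSpace.single a 1) (EuclideanSpace.single b 1) := by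
    intro a b
    have := hd.hasFDerivAt.clm_apply
      (hasFDerivAt_const (EuclideanSpace.single b (1 : ℝ) : E3) x)
    unfold pd
    rw [this.fderiv]
    simp
  rw [key, key]
  exact (hf.contDiffAt.isSymmSndFDerivAt (by simp)).eq _ _

lemma integrable_pd_and_integral (k : Fin 3) {f : E3 → ℝ} (hf : ContDiff ℝ 1 f)
    (hc : HasCompactSupport f) : Integrable (pd k f) ∧ ∫ x, pd k f x = 0 := by
  have hcont : Continuous (pd k f) :=
    ((hf.continuous_fderiv (by norm_num)).clm_apply continuous_const)
  have hcs : HasCompactSupport (pd k f) :=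
    hc.fderiv_apply (𝕜 := ℝ) (EuclideanSpace.single k 1)
  have hint : Integrable (pd k f) := hcont.integrable_of_hasCompactSupport hcs
  refine ⟨hint, ?_⟩
  have hfi : Integrable f := hf.continuous.integrable_of_hasCompactSupport hc
  have := integral_mul_fderiv_eq_neg_fderiv_mul_of_integrable (μ := (volume : Measure E3))
    (𝕜 := ℝ) (f := fun _ : E3 => (1 : ℝ)) (g := f) (v := EuclideanSpace.single k 1)
    (by simp) (by simp only [one_mul]; exact hint) (by simpa using hfi) (by fun_prop)
    (fun x _ => hf.differentiable (by norm_num) x)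
  simpa [pd] using this

/-! ### The pointwise quadratic form -/

/-- Positivity of the residual quadratic form. With `m = ω·Mω`, `T = tr M`, `p = T - m` and `S` the
symmetric part of `M`, one has `|M|² + κ tr M² ≥ (1 + κ)|S|²` and `|S|² ≥ m² + p²/2`, while
`|Mω|² ≥ m²`; what remains is a positive binary quadratic form in `(p, m)`. -/
lemma form_nonneg (α κ : ℝ) (hα : 0 ≤ α) (hα2 : α ≤ 2) (hκ : κ * (α + 2) = α)
    (w : Fin 3 → ℝ) (hw : ∑ i, w i * w i = 1) (M : Fin 3 → Fin 3 → ℝ) :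
    0 ≤ ∑ i, ∑ j, M i j * M i j + κ * ∑ i, (∑ j, M i j * w j) * (∑ j, M i j * w j)
      + α * (∑ i, M i i) * (∑ i, M i i)
      + α * κ * (∑ i, M i i) * (∑ i, ∑ j, w i * M i j * w j)
      - κ * ((∑ i, M i i) * (∑ i, M i i) - ∑ i, ∑ j, M i j * M j i) := by
  have hκ0 : 0 ≤ κ := by nlinarith
  have hκ1 : κ ≤ 1 := by nlinarith
  set m := ∑ i, ∑ j, w i * M i j * w j with hm
  set T := ∑ i, M i i with hT
  -- `|Mω|² ≥ m²`
  have hA : m ^ 2 ≤ ∑ i, (∑ j, M i j * w j) * (∑ j, M i j * w j) := by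
    have h := Finset.sum_mul_sq_le_sq_mul_sq Finset.univ w (fun i => ∑ j, M i j * w j)
    have e1 : ∑ i, w i * ∑ j, M i j * w j = m := by
      simp only [hm, Finset.mul_sum, mul_assoc]
    have e2 : ∑ i, w i ^ 2 = 1 := by rw [← hw]; simp only [pow_two]
    rw [e1, e2, one_mul] at h
    simpa only [pow_two] using h
  -- `|M|² ≥ |S|²`
  have hB : ∑ i, ∑ j, M i j * M j i ≤ ∑ i, ∑ j, M i j * M i j := by
    simp only [Fin.sum_univ_three]
    nlinarith [sq_nonneg (M 0 1 - M 1 0), sq_nonneg (M 0 2 - M 2 0), sq_nonneg (M 1 2 - M 2 1)]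
  -- the squared norm of `S - c ω⊗ω - d I`, to be used with `c = m - p/2`, `d = p/2`
  have hS : ∀ c d : ℝ, 0 ≤ (∑ i, ∑ j, M i j * M i j + ∑ i, ∑ j, M i j * M j i) / 2
      - 2 * c * m - 2 * d * T + c ^ 2 + 2 * c * d + 3 * d ^ 2 := by
    intro c d
    have h : (∑ i, ∑ j, ((M i j + M j i) / 2 - c * w i * w j - if i = j then d else 0) ^ 2)
        = (∑ i, ∑ j, M i j * M i j + ∑ i, ∑ j, M i j * M j i) / 2
          - 2 * c * m - 2 * d * T + c ^ 2 * (∑ i, w i * w i) ^ 2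
          + 2 * c * d * (∑ i, w i * w i) + 3 * d ^ 2 := by
      simp only [hm, hT, Fin.sum_univ_three]
      simp
      ring
    rw [hw] at h
    have h0 : 0 ≤ ∑ i, ∑ j,
        ((M i j + M j i) / 2 - c * w i * w j - if i = j then d else 0) ^ 2 := by positivity
    linarith
  have hS' := hS (m - (T - m) / 2) ((T - m) / 2)
  generalize ∑ i, ∑ j, M i j * M i j = a at *
  generalize ∑ i, ∑ j, M i j * M j i = b at *
  generalize ∑ i, (∑ j, M i j * w j) * (∑ j, M i j * w j) = e at *
  clear_value m T
  obtain ⟨p, rfl⟩ : ∃ p, T = p + m := ⟨T - m, by ring⟩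
  have h1 : m ^ 2 + p ^ 2 / 2 ≤ (a + b) / 2 := by nlinarith
  have h2 : κ * m ^ 2 ≤ κ * e := mul_le_mul_of_nonneg_left hA hκ0
  have h3 : (1 + κ) * (m ^ 2 + p ^ 2 / 2) ≤ (1 + κ) * ((a + b) / 2) :=
    mul_le_mul_of_nonneg_left h1 (by linarith)
  have h4 : (1 + κ) * ((a + b) / 2) ≤ a + κ * b := by nlinarith
  have h5 : 0 ≤ ((1 - κ) / 2 + α) * p ^ 2 + (1 + κ) * (1 + α) * m ^ 2
      + (2 * α - 2 * κ + α * κ) * (p * m) := by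
    have hpos : 0 < α + 2 := by linarith
    have e : κ = α / (α + 2) := by field_simp; linarith
    have : ((1 - κ) / 2 + α) * p ^ 2 + (1 + κ) * (1 + α) * m ^ 2
      + (2 * α - 2 * κ + α * κ) * (p * m) = ((α + 1) ^ 2 * (p ^ 2 + 2 * m ^ 2)
        + (3 * α ^ 2 + 2 * α) * (p * m)) / (α + 2) := by
      rw [e]; field_simp; ring
    rw [this]
    apply div_nonneg _ hpos.le
    have q1 : 0 ≤ 3 * α ^ 2 + 2 * α := by positivity
    have q2 : 3 * α ^ 2 + 2 * α ≤ 2 * (α + 1) ^ 2 := by nlinarith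
    nlinarith [mul_nonneg q1 (sq_nonneg (p + m)), mul_nonneg (sub_nonneg.2 q2) (sq_nonneg p),
      mul_nonneg (sub_nonneg.2 q2) (sq_nonneg m), mul_nonneg q1 (sq_nonneg m)]
  nlinarith

/-! ### The flux -/

/-- The `k`-th component of the vector field whose divergence turns the energy density into
a pointwise nonnegative form in the first derivatives. Odd powers of `‖y‖⁻¹` are written as products
so that the product rule applies to them directly. -/
def flux (α κ : ℝ) (U : Fin 3 → E3 → ℝ) (k : Fin 3) (y : E3) : ℝ :=
  (-1) * (‖y‖⁻¹ * ∑ i, U i y * pd k (U i) y)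
  + (-κ) * ((‖y‖⁻¹ * (‖y‖⁻¹ * ‖y‖⁻¹)) * ((∑ i, U i y * y i) * ∑ i, y i * pd k (U i) y))
  + (-α) * ((∑ i, pd i (U i) y) * (‖y‖⁻¹ * U k y
      + κ * ((‖y‖⁻¹ * (‖y‖⁻¹ * ‖y‖⁻¹)) * ((∑ i, U i y * y i) * y k))))
  + (-1 / 2) * ((‖y‖⁻¹ * (‖y‖⁻¹ * ‖y‖⁻¹)) * ((∑ i, U i y * U i y) * y k))
  + (-3 / 2 * κ) * ((‖y‖⁻¹ * (‖y‖⁻¹ * ‖y‖⁻¹) * (‖y‖⁻¹ * ‖y‖⁻¹))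
      * (((∑ i, U i y * y i) * (∑ i, U i y * y i)) * y k))
  + κ * (‖y‖⁻¹ * (U k y * (∑ i, pd i (U i) y)))
  + (-κ) * (‖y‖⁻¹ * ∑ i, U i y * pd i (U k) y)

lemma flux_eq_zero {α κ : ℝ} {U : Fin 3 → E3 → ℝ} {k : Fin 3} {y : E3} (h : ∀ i, U i y = 0) :
    flux α κ U k y = 0 := by
  simp [flux, h]

lemma contDiffAt_flux {α κ : ℝ} {U : Fin 3 → E3 → ℝ} (hU : ∀ i, ContDiff ℝ 2 (U i))
    (k : Fin 3) {x : E3} (hx : x ≠ 0) : ContDiffAt ℝ 1 (flux α κ U k) x := by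
  have h0 : ∀ i, ContDiffAt ℝ 1 (U i) x := fun i => ((hU i).of_le (by norm_num)).contDiffAt
  have h1 : ∀ i j, ContDiffAt ℝ 1 (pd j (U i)) x := fun i j =>
    (contDiff_pd (n := 1) j (hU i)).contDiffAt
  have hr : ContDiffAt ℝ 1 (fun y : E3 => ‖y‖⁻¹) x :=
    (contDiffAt_norm ℝ hx).inv (norm_ne_zero_iff.mpr hx)
  have hc : ∀ i, ContDiffAt ℝ 1 (fun y : E3 => y i) x := fun i =>
    (EuclideanSpace.proj i : E3 →L[ℝ] ℝ).contDiff.contDiffAt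
  unfold flux
  fun_prop

/-- Energy density minus the divergence of `flux`: away from the origin only a quadratic form in the
first derivatives is left. -/
lemma divergence_identity (α κ : ℝ) (hκ : κ * (α + 2) = α) (U : Fin 3 → E3 → ℝ)
    (hU : ∀ i, ContDiff ℝ 2 (U i)) {x : E3} (hx : x ≠ 0) :
    ∑ i, ∑ j, (-(∑ k, pd k (pd k (U i)) x) - α * ∑ k, pd i (pd k (U k)) x) *
        (‖x‖⁻¹ * ((if i = j then (1 : ℝ) else 0) + κ * (x i * x j) * ‖x‖⁻¹ ^ 2)) * U j x
      - ∑ k, pd k (flux α κ U k) x =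
    ‖x‖⁻¹ * (∑ i, ∑ j, pd i (U j) x * pd i (U j) x
      + κ * ∑ i, (∑ j, pd i (U j) x * (‖x‖⁻¹ * x j)) * (∑ j, pd i (U j) x * (‖x‖⁻¹ * x j))
      + α * (∑ i, pd i (U i) x) * (∑ i, pd i (U i) x)
      + α * κ * (∑ i, pd i (U i) x) *
          (∑ i, ∑ j, (‖x‖⁻¹ * x i) * pd i (U j) x * (‖x‖⁻¹ * x j))
      - κ * ((∑ i, pd i (U i) x) * (∑ i, pd i (U i) x)
          - ∑ i, ∑ j, pd i (U j) x * pd j (U i) x)) := by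
  have hrel : ‖x‖⁻¹ ^ 2 * (x 0 ^ 2 + x 1 ^ 2 + x 2 ^ 2) = 1 := by
    have hn : ‖x‖ ≠ 0 := norm_ne_zero_iff.mpr hx
    have := EuclideanSpace.norm_sq_eq x
    simp only [Fin.sum_univ_three, Real.norm_eq_abs, sq_abs] at this
    rw [← this]
    field_simp
  have h0 : ∀ k i, HasPd k (U i) (pd k (U i) x) x := fun k i =>
    .of_diff ((hU i).differentiable (by norm_num) x)
  have h1 : ∀ k j i, HasPd k (pd j (U i)) (pd k (pd j (U i)) x) x := fun k j i =>
    .of_diff ((contDiff_pd (n := 1) j (hU i)).differentiable (by norm_num) x)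
  have hr := fun k => hasPd_inv_norm k hx
  have hr3 := fun k => (hr k).mul ((hr k).mul (hr k))
  have hr5 := fun k => (hr3 k).mul ((hr k).mul (hr k))
  have hc := fun k j => hasPd_coord k j x
  have hux := fun k => HasPd.sum fun i => (h0 k i).mul (hc k i)
  have hdiv := fun k => HasPd.sum fun i => h1 k i i
  have hflux := fun k =>
    ((((((((hr k).mul (HasPd.sum fun i => (h0 k i).mul (h1 k k i))).const_mul (-1)).add
    (((hr3 k).mul ((hux k).mul (HasPd.sum fun i => (hc k i).mul (h1 k k i)))).const_mul (-κ))).add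
    (((hdiv k).mul (((hr k).mul (h0 k k)).add
      (((hr3 k).mul ((hux k).mul (hc k k))).const_mul κ))).const_mul (-α))).add
    (((hr3 k).mul ((HasPd.sum fun i => (h0 k i).mul (h0 k i)).mul (hc k k))).const_mul
      (-1 / 2))).add
    (((hr5 k).mul (((hux k).mul (hux k)).mul (hc k k))).const_mul (-3 / 2 * κ))).add
    (((hr k).mul ((h0 k k).mul (hdiv k))).const_mul κ)).add
    (((hr k).mul (HasPd.sum fun i => (h0 k i).mul (h1 k i k))).const_mul (-κ))
  have hpd : ∀ k, pd k (flux α κ U k) x = _ := fun k => (hflux k).2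
  have c10 := fun i => pd_comm 1 0 (hU i) x
  have c20 := fun i => pd_comm 2 0 (hU i) x
  have c21 := fun i => pd_comm 2 1 (hU i) x
  simp only [hpd]
  clear hpd hflux
  simp only [Fin.sum_univ_three, c10, c20, c21]
  simp only [Fin.isValue, reduceIte, show (0 : Fin 3) ≠ 1 by decide, show (0 : Fin 3) ≠ 2 by decide,
    show (1 : Fin 3) ≠ 0 by decide, show (1 : Fin 3) ≠ 2 by decide, show (2 : Fin 3) ≠ 0 by decide,
    show (2 : Fin 3) ≠ 1 by decide]
  generalize ‖x‖⁻¹ = r at hrel ⊢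
  -- `hrel` enters where a derivative of a power of `r` meets `x`, `hκ` in the coefficient of
  -- `(div u) (u·x)`
  linear_combination
    (-(3 / 2 * r ^ 3 * (U 0 x ^ 2 + U 1 x ^ 2 + U 2 x ^ 2)
      + 15 / 2 * κ * r ^ 5 * (U 0 x * x 0 + U 1 x * x 1 + U 2 x * x 2) ^ 2
      + 3 * α * κ * r ^ 3 * (pd 0 (U 0) x + pd 1 (U 1) x + pd 2 (U 2) x)
        * (U 0 x * x 0 + U 1 x * x 1 + U 2 x * x 2))) * hrel
    + r ^ 3 * (pd 0 (U 0) x + pd 1 (U 1) x + pd 2 (U 2) x)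
        * (U 0 x * x 0 + U 1 x * x 1 + U 2 x * x 2) * hκ

/-- For `0 ≤ α` satisfying the two polynomial inequalities (i.e. `0 ≤ α < α₊`),
the 3D Lamé system is positive definite with weight `Φ`. -/
theorem lame_weighted_positive_definite_of_nonneg
    (α : ℝ) (hα : 0 ≤ α)
    (h1 : α ^ 4 - 4 * (1 - Real.sqrt 2) * α ^ 3 - 12 * (3 - Real.sqrt 2) * α ^ 2 - 12 * (6 - Real.sqrt 2) * α - 48 < 0)
    (h2 : 6 * α ^ 5 + (23 + 3 * Real.sqrt 2) * α ^ 4 + (13 + 19 * Real.sqrt 2) * α ^ 3 - (77 - 38 * Real.sqrt 2) * α ^ 2 - (157 - 24 * Real.sqrt 2) * α - 96 < 0)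
    (u : E3 → Fin 3 → ℝ) (hu : IsTestOn ({(0 : E3)}ᶜ) u) :
    0 ≤ ∫ x : E3, ∑ i, ∑ j, lame α u x i * Phi α x i j * u x j := by
  obtain ⟨hsm, hcs, hsupp⟩ := hu
  have hα2 : α ≤ 2 := by
    by_contra! h
    have s1 : (1.4 : ℝ) ≤ √2 := Real.le_sqrt_of_sq_le (by norm_num)
    obtain ⟨t, ht, rfl⟩ : ∃ t, 0 < t ∧ α = t + 2 := ⟨α - 2, by linarith, by ring⟩
    have ht2 := pow_pos ht 2
    have ht3 := pow_pos ht 3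
    have ht4 := pow_pos ht 4
    have ht5 := pow_pos ht 5
    have s2 := mul_nonneg (sub_nonneg.2 s1) (show 0 ≤ 3 * (t + 2) ^ 4 + 19 * (t + 2) ^ 3
      + 38 * (t + 2) ^ 2 + 24 * (t + 2) by positivity)
    nlinarith
  have hα2' : α + 2 ≠ 0 := by positivity
  set κ := α / (α + 2) with hκdef
  have hκ : κ * (α + 2) = α := by rw [hκdef]; field_simp
  have hcA : 0 ≤ cA α := by unfold cA; positivity
  let U : Fin 3 → E3 → ℝ := fun i y => u y i
  have hU : ∀ i, ContDiff ℝ 2 (U i) := fun i =>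
    ((contDiff_pi.1 hsm) i).of_le (WithTop.coe_le_coe.2 le_top)
  have hnear : ∀ᶠ y in nhds (0 : E3), u y = 0 :=
    notMem_tsupport_iff_eventuallyEq.1 fun h => hsupp h rfl
  have hflux0 : ∀ k, flux α κ U k =ᶠ[nhds 0] fun _ => 0 := fun k => by
    filter_upwards [hnear] with y hy
    exact flux_eq_zero fun i => by simp [U, hy]
  have hfluxC : ∀ k, ContDiff ℝ 1 (flux α κ U k) := fun k => by
    rw [contDiff_iff_contDiffAt]
    intro x
    by_cases hx : x = 0
    · subst hx
      exact contDiffAt_const.congr_of_eventuallyEq (hflux0 k)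
    · exact contDiffAt_flux hU k hx
  have hfluxS : ∀ k, HasCompactSupport (flux α κ U k) := fun k => by
    refine hcs.mono fun y hy => ?_
    contrapose! hy
    have hy' : u y = 0 := by simpa using hy
    simpa using flux_eq_zero fun i => by simp [U, hy']
  have hint := fun k => integrable_pd_and_integral k (hfluxC k) (hfluxS k)
  have hpt : ∀ x, cA α * ∑ k, pd k (flux α κ U k) x
      ≤ ∑ i, ∑ j, lame α u x i * Phi α x i j * u x j := by
    intro x
    by_cases hx : x = 0
    · subst hx
      have e1 : ∀ k, pd k (flux α κ U k) 0 = 0 := fun k => by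
        simp [pd, (hflux0 k).fderiv_eq]
      simp [e1, hnear.self_of_nhds]
    · have hd := divergence_identity α κ hκ U hU hx
      have hn : ‖x‖ ≠ 0 := norm_ne_zero_iff.mpr hx
      have hw : ∑ i, (‖x‖⁻¹ * x i) * (‖x‖⁻¹ * x i) = 1 := by
        have := EuclideanSpace.norm_sq_eq x
        simp only [Real.norm_eq_abs, sq_abs] at this
        have e : ∀ i, (‖x‖⁻¹ * x i) * (‖x‖⁻¹ * x i) = (‖x‖ ^ 2)⁻¹ * x i ^ 2 := fun i => by
          field_simp
        simp only [e]
        rw [← Finset.mul_sum, ← this]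
        field_simp
      have hf := form_nonneg α κ hα hα2 hκ (fun i => ‖x‖⁻¹ * x i) hw fun i j => pd i (U j) x
      have hdivg : ∀ i, pd i (divg u) x = ∑ k, pd i (pd k (U k)) x := fun i =>
        (HasPd.sum (k := i) fun k => HasPd.of_diff
          ((contDiff_pd (n := 1) k (hU k)).differentiable (by norm_num) x)).2
      have hE : ∑ i, ∑ j, lame α u x i * Phi α x i j * u x j = cA α *
          ∑ i, ∑ j, (-(∑ k, pd k (pd k (U i)) x) - α * ∑ k, pd i (pd k (U k)) x) *
            (‖x‖⁻¹ * ((if i = j then (1 : ℝ) else 0) + κ * (x i * x j) * ‖x‖⁻¹ ^ 2)) * U j x := by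
        simp only [Finset.mul_sum (a := cA α)]
        refine Finset.sum_congr rfl fun i _ => Finset.sum_congr rfl fun j _ => ?_
        simp only [lame, lap, hdivg, Phi, ← hκdef, div_eq_mul_inv _ (‖x‖ ^ 2), inv_pow]
        ring
      rw [hE]
      refine mul_le_mul_of_nonneg_left ?_ hcA
      have := mul_nonneg (inv_nonneg.2 (norm_nonneg x)) hf
      rw [← hd] at this
      linarith
  -- a non-integrable integrand has integral `0` by convention
  by_cases hI : Integrable fun x : E3 => ∑ i, ∑ j, lame α u x i * Phi α x i j * u x j
  · have hJ : Integrable fun x : E3 => cA α * ∑ k, pd k (flux α κ U k) x :=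
      (integrable_finsetSum _ fun k _ => (hint k).1).const_mul _
    have h0 : ∫ x : E3, cA α * ∑ k, pd k (flux α κ U k) x = 0 := by
      rw [integral_const_mul, integral_finsetSum _ fun k _ => (hint k).1]
      simp [fun k => (hint k).2]
    rw [← h0]
    exact integral_mono hJ hI hpt
  · rw [integral_undef hI]
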